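/- For every superlinear function g : ℕ → ℕ and every α ≥ 1, the class C_g is not adaptively additively α-robustly learnable; moreover, there exists an adaptive additive adversary V_add with fixed constant budget that is a universal α-adversary for C_g. -/

import Mathlib

open scoped ENNReal NNReal

/-- Total variation distance between two discrete distributions. -/
noncomputable def tv {X : Type*} (p q : PMF X) : ℝ :=
  (∑' x, |(p x).toReal - (q x).toReal|) / 2

/-- The distribution of an i.i.d. sample of size `m` from `p`, viewed as a multiset. -/
noncomputable def iid {X : Type*} (p : PMF X) : ℕ → PMF (Multiset X)
  | 0 => PMF.pure 0
  | n + 1 => (iid p n).bind fun s => p.map fun x => x ::ₘ s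

/-- `|Q|^m` : first draw `q ∼ Q`, then an i.i.d. sample `S ∼ q^m`. -/
noncomputable def metaSample {X : Type*} (Q : PMF (PMF X)) (m : ℕ) : PMF (Multiset X) :=
  Q.bind fun q => iid q m

/-- An adaptive adversary: a randomized map from samples (finite multisets) to samples. -/
abbrev Adversary (X : Type*) := Multiset X → PMF (Multiset X)

/-- `V(P)`: the distribution of `V S` for `S ∼ P` (including internal randomness). -/
noncomputable def advPush {X : Type*} (V : Adversary X) (P : PMF (Multiset X)) :
    PMF (Multiset X) := P.bind V

/-- An additive adversary only adds points: `S ⊆ V(S)` almost surely. -/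
def IsAdditive {X : Type*} (V : Adversary X) : Prop :=
  ∀ S T, T ∈ (V S).support → S ≤ T

/-- A subtractive adversary only removes points: `V(S) ⊆ S` almost surely. -/
def IsSubtractive {X : Type*} (V : Adversary X) : Prop :=
  ∀ S T, T ∈ (V S).support → T ≤ S

/-- Fixed constant budget `η`: `|V(S)|` depends only on `|S|` (via `c`), and for every `m`,
`η m − 1 < m·budget(V,m) ≤ η m` where `m·budget(V,m) = ||V(S)| − |S||`. -/
def FixedBudget {X : Type*} (V : Adversary X) (η : ℝ) : Prop :=
  ∃ c : ℕ → ℕ, (∀ S T, T ∈ (V S).support → Multiset.card T = c (Multiset.card S)) ∧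
    ∀ m : ℕ, η * m - 1 < |(c m : ℝ) - m| ∧ |(c m : ℝ) - m| ≤ η * m

/-- Fixed constant budget `η` for an additive adversary (`m·budget(V,m) = |V(S)| − |S|`). -/
def FixedBudgetAdd {X : Type*} (V : Adversary X) (η : ℝ) : Prop :=
  ∃ c : ℕ → ℕ, (∀ S T, T ∈ (V S).support → Multiset.card T = c (Multiset.card S)) ∧
    ∀ m : ℕ, η * m - 1 < (c m : ℝ) - m ∧ (c m : ℝ) - m ≤ η * m

/-- Fixed constant budget `η` for a subtractive adversary (`m·budget(V,m) = |S| − |V(S)|`). -/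
def FixedBudgetSub {X : Type*} (V : Adversary X) (η : ℝ) : Prop :=
  ∃ c : ℕ → ℕ, (∀ S T, T ∈ (V S).support → Multiset.card T = c (Multiset.card S)) ∧
    ∀ m : ℕ, η * m - 1 < (m : ℝ) - c m ∧ (m : ℝ) - c m ≤ η * m

/-- Probability of an event under a discrete distribution. -/
noncomputable def probEvent {β : Type*} (P : PMF β) (E : Set β) : ℝ≥0∞ :=
  P.toOuterMeasure E

/-- `A` with sample complexity `mc` learns the class `C` against adversary `V`,
up to error `bound + ε` with confidence `1 − δ` once `m ≥ mc ε δ`. -/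
def RobustLearnerFor {X : Type*} (C : Set (PMF X)) (A : Multiset X → PMF X)
    (mc : ℝ → ℝ → ℕ) (V : Adversary X) (bound : ℝ) : Prop :=
  ∀ p ∈ C, ∀ ε δ : ℝ, 0 < ε → ε < 1 → 0 < δ → δ < 1 →
    ∀ m : ℕ, mc ε δ ≤ m →
      1 - ENNReal.ofReal δ ≤
        probEvent ((iid p m).bind V) {T | tv (A T) p ≤ bound + ε}

/-- `C` is adaptively α-robustly learnable w.r.t. the single adversary `V` with budget `η`. -/
def RobustlyLearnableWrt {X : Type*} (C : Set (PMF X)) (α : ℝ)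
    (V : Adversary X) (η : ℝ) : Prop :=
  ∃ A mc, RobustLearnerFor C A mc V (α * η)

/-- `V` (with budget `η`) is a universal α-adversary for `C`. -/
def UniversalAdversary {X : Type*} (C : Set (PMF X)) (α : ℝ)
    (V : Adversary X) (η : ℝ) : Prop :=
  ¬ RobustlyLearnableWrt C α V η

/-- `C` is adaptively α-robustly learnable w.r.t. a class `𝒱` of adversaries
(each given with its budget). -/
def RobustlyLearnableWrtClass {X : Type*} (C : Set (PMF X)) (α : ℝ)
    (𝒱 : Set (Adversary X × ℝ)) : Prop :=
  ∃ A mc, ∀ Vη ∈ 𝒱, RobustLearnerFor C A mc Vη.1 (α * Vη.2)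

/-- `C` is adaptively additively α-robustly learnable: one learner works simultaneously
against all additive adaptive adversaries with fixed constant budgets. -/
def AdditivelyRobustlyLearnable {X : Type*} (C : Set (PMF X)) (α : ℝ) : Prop :=
  ∃ A mc, ∀ V : Adversary X, ∀ η : ℝ, 0 < η → η < 1 →
    IsAdditive V → FixedBudgetAdd V η → RobustLearnerFor C A mc V (α * η)

/-- `C` is adaptively subtractively α-robustly learnable. -/
def SubtractivelyRobustlyLearnable {X : Type*} (C : Set (PMF X)) (α : ℝ) : Prop :=
  ∃ A mc, ∀ V : Adversary X, ∀ η : ℝ, 0 < η → η < 1 →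
    IsSubtractive V → FixedBudgetSub V η → RobustLearnerFor C A mc V (α * η)

/-- The pair `(V1, V2)` successfully `(γ,ζ)`-confuses `C`-generated samples of size `m`. -/
def ConfusesPair {X : Type*} (C : Set (PMF X)) (V1 V2 : Adversary X)
    (γ ζ : ℝ) (m : ℕ) : Prop :=
  ∃ p ∈ C, ∃ Q : PMF (PMF X), Q.support ⊆ C ∧
    (∀ q ∈ Q.support, γ < tv p q) ∧
    tv (advPush V1 (metaSample Q m)) (advPush V2 (iid p m)) < ζ

/-- A single adversary `V` successfully `(γ,ζ)`-confuses `C`-generated samples of size `m`. -/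
def Confuses {X : Type*} (C : Set (PMF X)) (V : Adversary X) (γ ζ : ℝ) (m : ℕ) : Prop :=
  ConfusesPair C V V γ ζ m

/-- `p` is the distribution `p_{i,j,k} = (1 − 1/j)·δ_{(0,0)} + (1/j − 1/k)·U_{B_i×{2j+1}}
 + (1/k)·δ_{(i,2j+2)}` on `ℕ × ℕ`. -/
def IsPijk (B : ℕ → Finset ℕ) (i j k : ℕ) (p : PMF (ℕ × ℕ)) : Prop :=
  ∀ x : ℕ × ℕ,
    p x = (1 - ((j : ℝ≥0∞))⁻¹) * (if x = (0, 0) then 1 else 0)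
      + (((j : ℝ≥0∞))⁻¹ - ((k : ℝ≥0∞))⁻¹) *
          (if x.1 ∈ B i ∧ x.2 = 2 * j + 1 then (((B i).card : ℝ≥0∞))⁻¹ else 0)
      + ((k : ℝ≥0∞))⁻¹ * (if x = (i, 2 * j + 2) then 1 else 0)

/-- The class `C_g = {p_{i,j,g(j)} : i, j ∈ ℕ}` (for the meaningful parameters). -/
def Cg (B : ℕ → Finset ℕ) (g : ℕ → ℕ) : Set (PMF (ℕ × ℕ)) :=
  {p | ∃ i j : ℕ, 1 ≤ j ∧ j < g j ∧ (B i).Nonempty ∧ IsPijk B i j (g j) p}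

/-- `g` is superlinear: `g(n)/n → ∞`. -/
def Superlinear (g : ℕ → ℕ) : Prop :=
  Filter.Tendsto (fun n => (g n : ℝ) / n) Filter.atTop Filter.atTop

/-! Fix `j` with `g j` much larger than `α j`, and number the elements of `B_i` by `0, …, n - 1`
with `n` more than twice the sample size `m`. A sample of `p_{i,j,g(j)}` is a latent sample of
origins, element numbers and index marks, embedded into `ℕ × ℕ` by means of bits `σ` that pick
`B_i = {2a + σ(a)}`. For a given latent sample, flipping all the bits whose element does not occur
in it is an involution on the `σ`. It changes at least half of `B_i`, hence moves the distribution
by order `1 / j` in total variation, but it only affects the index points of the sample. So an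
adversary that inserts the index points of the flipped sample turns both samples into the same
multiset, on which no learner can be close to both distributions. This needs as many insertions as
there are index points, about `m / g(j)` of them: by Markov's inequality a budget of `4 / g(j)`,
which is well below `1 / (α j)`, fails to suffice with probability at most `1 / 4`. Averaging over
`σ`, every learner succeeds for some `σ` with probability at most `(1 + 1 / 4) / 2 < 3 / 4`. -/

theorem add_filter_map_comm {X : Type*} (Q : X → Prop) [DecidablePred Q] {φ : X → X}
    (hQ : ∀ x, Q (φ x) ↔ Q x) (hfix : ∀ x, ¬ Q x → φ x = x) (S : Multiset X) :
    S + (S.map φ).filter Q = S.map φ + S.filter Q := by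
  induction S using Multiset.induction_on with
  | empty => rfl
  | cons x S ih =>
    by_cases hx : Q x
    · simp [hx, hQ, ih, Multiset.cons_swap x]
    · simp [hx, hfix, ih]

section Probability

theorem probEvent_eq_tsum {Ω : Type*} (P : PMF Ω) (E : Set Ω) :
    probEvent P E = ∑' w, P w * E.indicator 1 w := by
  rw [probEvent, PMF.toOuterMeasure_apply]
  refine tsum_congr fun w => ?_
  by_cases hw : w ∈ E <;> simp [hw]

theorem probEvent_map {Ω Ω' : Type*} (P : PMF Ω) (f : Ω → Ω') (E : Set Ω') :
    probEvent (P.map f) E = probEvent P (f ⁻¹' E) :=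
  PMF.toOuterMeasure_map_apply f P E

theorem mul_probEvent_le_tsum {Ω : Type*} (P : PMF Ω) (f : Ω → ℝ≥0∞) (c : ℝ≥0∞) :
    c * probEvent P {w | c ≤ f w} ≤ ∑' w, P w * f w := by
  rw [probEvent_eq_tsum, ← ENNReal.tsum_mul_left]
  refine ENNReal.tsum_le_tsum fun w => ?_
  rw [mul_left_comm]
  gcongr
  by_cases hw : c ≤ f w <;> simp [hw]

theorem tsum_bind_mul {Ω Ω' : Type*} (P : PMF Ω) (f : Ω → PMF Ω') (h : Ω' → ℝ≥0∞) :
    ∑' y, P.bind f y * h y = ∑' x, P x * ∑' y, f x y * h y := by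
  simp only [PMF.bind_apply, ← ENNReal.tsum_mul_right, ← ENNReal.tsum_mul_left, mul_assoc]
  exact ENNReal.tsum_comm

theorem tsum_pure_mul {Ω : Type*} (x : Ω) (h : Ω → ℝ≥0∞) :
    ∑' y, PMF.pure x y * h y = h x := by
  rw [tsum_eq_single x fun y hy => by simp [hy], PMF.pure_apply_self, one_mul]

theorem tsum_map_mul {Ω Ω' : Type*} (P : PMF Ω) (f : Ω → Ω') (h : Ω' → ℝ≥0∞) :
    ∑' y, P.map f y * h y = ∑' x, P x * h (f x) := by
  simp only [PMF.map, tsum_bind_mul, Function.comp_apply, tsum_pure_mul]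

theorem map_uniformOfFintype_apply {ι X : Type*} [Fintype ι] [Nonempty ι] [DecidableEq X]
    {f : ι → X} (hf : Function.Injective f) (x : X) :
    (PMF.uniformOfFintype ι).map f x =
      if x ∈ Finset.univ.image f then (Fintype.card ι : ℝ≥0∞)⁻¹ else 0 := by
  rw [PMF.map_apply]
  split_ifs with hx
  · obtain ⟨a, -, rfl⟩ := Finset.mem_image.1 hx
    rw [tsum_eq_single a fun b hb => by simp [hf.eq_iff, hb.symm]]
    simp
  · refine ENNReal.tsum_eq_zero.2 fun a => if_neg ?_
    rintro rfl
    exact hx (Finset.mem_image_of_mem f (Finset.mem_univ a))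

end Probability

section Iid

variable {X Y : Type*}

theorem iid_map (p : PMF X) (f : X → Y) (m : ℕ) :
    iid (p.map f) m = (iid p m).map (Multiset.map f) := by
  induction m with
  | zero => simp only [iid, PMF.pure_map, Multiset.map_zero]
  | succ m ih =>
    simp only [iid, ih, PMF.map_bind, PMF.bind_map, PMF.map_comp, Function.comp_def,
      Multiset.map_cons]

theorem card_of_mem_support_iid (p : PMF X) (m : ℕ) {w : Multiset X}
    (hw : w ∈ (iid p m).support) : w.card = m := by
  induction m generalizing w with
  | zero => simp_all [iid]
  | succ m ih =>
    simp only [iid, PMF.mem_support_bind_iff, PMF.support_map, Set.mem_image] at hw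
    obtain ⟨s, hs, x, -, rfl⟩ := hw
    rw [Multiset.card_cons, ih hs]

theorem tsum_iid_mul_count [DecidableEq X] (p : PMF X) (x : X) (m : ℕ) :
    ∑' w, iid p m w * (w.count x : ℝ≥0∞) = m * p x := by
  induction m with
  | zero => simp [iid]
  | succ m ih =>
    have hx : ∑' y, p y * ((if x = y then 1 else 0 : ℕ) : ℝ≥0∞) = p x := by
      rw [tsum_eq_single x fun y hy => by simp [hy.symm]]
      simp
    simp only [iid, tsum_bind_mul, tsum_map_mul, Multiset.count_cons, Nat.cast_add, mul_add,
      ENNReal.tsum_add, ENNReal.tsum_mul_right, PMF.tsum_coe, one_mul, ih, hx]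
    push_cast
    ring

theorem mul_probEvent_iid_le_count [DecidableEq X] (p : PMF X) (x : X) (m N : ℕ) :
    (N : ℝ≥0∞) * probEvent (iid p m) {w | N ≤ w.count x} ≤ m * p x := by
  simpa only [Nat.cast_le, tsum_iid_mul_count] using
    mul_probEvent_le_tsum (iid p m) (fun w => (w.count x : ℝ≥0∞)) N

theorem probEvent_iid_floor_lt_count_le [DecidableEq X] (p : PMF X) (x : X) {η : ℝ} (hη : 0 < η)
    (m : ℕ) :
    probEvent (iid p m) {w | ⌊η * m⌋₊ < w.count x} ≤ p x / ENNReal.ofReal η := by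
  obtain rfl | hm := m.eq_zero_or_pos
  · simp [iid, probEvent]
  have hfloor : ENNReal.ofReal η * m ≤ (⌊η * m⌋₊ + 1 : ℕ) := by
    rw [← ENNReal.ofReal_natCast, ← ENNReal.ofReal_mul hη.le, ← ENNReal.ofReal_natCast]
    exact ENNReal.ofReal_le_ofReal (by exact_mod_cast (Nat.lt_floor_add_one (η * m)).le)
  have hm₀ : (m : ℝ≥0∞) ≠ 0 := by exact_mod_cast hm.ne'
  rw [ENNReal.le_div_iff_mul_le (by simp [hη]) (by simp),
    ← ENNReal.mul_le_mul_iff_right hm₀ (ENNReal.natCast_ne_top m)]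
  calc (m : ℝ≥0∞) * (probEvent (iid p m) {w | ⌊η * m⌋₊ < w.count x} * ENNReal.ofReal η)
      = ENNReal.ofReal η * m * probEvent (iid p m) {w | ⌊η * m⌋₊ < w.count x} := by ring
    _ ≤ (⌊η * m⌋₊ + 1 : ℕ) * probEvent (iid p m) {w | ⌊η * m⌋₊ + 1 ≤ w.count x} := by
        gcongr
        rfl
    _ ≤ m * p x := mul_probEvent_iid_le_count p x m _

end Iid

section TotalVariation

variable {X : Type*} (p q r : PMF X)

theorem summable_toReal_apply : Summable fun x => (p x).toReal :=
  ENNReal.summable_toReal p.tsum_coe_ne_top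

theorem summable_abs_toReal_sub : Summable fun x => |(p x).toReal - (q x).toReal| :=
  ((summable_toReal_apply p).sub (summable_toReal_apply q)).abs

theorem tv_comm : tv p q = tv q p := by
  simp only [tv, abs_sub_comm]

theorem tv_triangle : tv p r ≤ tv p q + tv q r := by
  have hpq := summable_abs_toReal_sub p q
  have hqr := summable_abs_toReal_sub q r
  rw [tv, tv, tv, ← add_div, ← hpq.tsum_add hqr]
  gcongr ?_ / 2
  exact (summable_abs_toReal_sub p r).tsum_le_tsum (fun x => abs_sub_le _ _ _) (hpq.add hqr)

theorem sum_abs_toReal_sub_le_two_mul_tv (F : Finset X) :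
    ∑ x ∈ F, |(p x).toReal - (q x).toReal| ≤ 2 * tv p q := by
  rw [tv, mul_div_cancel₀ _ two_ne_zero]
  exact (summable_abs_toReal_sub p q).sum_le_tsum F fun _ _ => abs_nonneg _

end TotalVariation

section Fooling

theorem two_mul_card_le_of_involutive {Θ : Type*} [Fintype Θ] {f : Θ → Θ}
    (hf : Function.Involutive f) (A : Finset Θ) (hA : ∀ s ∈ A, f s ∉ A) :
    2 * A.card ≤ Fintype.card Θ := by
  have hdisj : Disjoint A (A.map ⟨f, hf.injective⟩) := by
    rw [Finset.disjoint_right]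
    simpa using hA
  calc 2 * A.card = (A.disjUnion _ hdisj).card := by
        rw [Finset.card_disjUnion, Finset.card_map, two_mul]
    _ ≤ Fintype.card Θ := Finset.card_le_univ _

open scoped Classical in
theorem sum_probEvent {Ω Θ : Type*} [Fintype Θ] (P : PMF Ω) (G : Θ → Set Ω) :
    ∑ s, probEvent P (G s) = ∑' w, P w * (Finset.univ.filter (w ∈ G ·)).card := by
  simp only [probEvent_eq_tsum]
  rw [← Summable.tsum_finsetSum fun _ _ => ENNReal.summable]
  simp only [← Finset.mul_sum, Set.indicator_apply, Pi.one_apply, Finset.sum_boole]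

theorem two_mul_sum_probEvent_le_of_involutive {Ω Θ : Type*} [Fintype Θ] (P : PMF Ω)
    (G : Θ → Set Ω) (bad : Set Ω) (flip : Ω → Θ → Θ)
    (hflip : ∀ w, Function.Involutive (flip w))
    (hG : ∀ w ∈ P.support, w ∉ bad → ∀ s, w ∈ G s → w ∉ G (flip w s)) :
    2 * ∑ s, probEvent P (G s) ≤ (1 + probEvent P bad) * Fintype.card Θ := by
  classical
  have hcard (w : Ω) (hw : w ∈ P.support) :
      (2 * (Finset.univ.filter (w ∈ G ·)).card : ℝ≥0∞) ≤
        (1 + bad.indicator 1 w) * Fintype.card Θ := by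
    by_cases hb : w ∈ bad
    · rw [Set.indicator_of_mem hb, Pi.one_apply, one_add_one_eq_two]
      gcongr
      exact Finset.card_le_univ _
    · rw [Set.indicator_of_notMem hb, add_zero, one_mul]
      exact_mod_cast two_mul_card_le_of_involutive (hflip w) _ (by simpa using hG w hw hb)
  calc 2 * ∑ s, probEvent P (G s)
      = ∑' w, P w * (2 * (Finset.univ.filter (w ∈ G ·)).card) := by
        rw [sum_probEvent, ← ENNReal.tsum_mul_left]
        simp only [mul_left_comm]
    _ ≤ ∑' w, P w * ((1 + bad.indicator 1 w) * Fintype.card Θ) := by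
        refine ENNReal.tsum_le_tsum fun w => ?_
        by_cases hw : w ∈ P.support
        · gcongr P w * ?_
          exact hcard w hw
        · rw [P.apply_eq_zero_iff w |>.2 hw, zero_mul, zero_mul]
    _ = (1 + probEvent P bad) * Fintype.card Θ := by
        simp only [← mul_assoc, mul_add, mul_one, ENNReal.tsum_mul_right, ENNReal.tsum_add,
          P.tsum_coe, probEvent_eq_tsum]

theorem exists_probEvent_le_of_involutive {Ω Θ : Type*} [Finite Θ] [Nonempty Θ] (P : PMF Ω)
    (G : Θ → Set Ω) (bad : Set Ω) (flip : Ω → Θ → Θ)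
    (hflip : ∀ w, Function.Involutive (flip w))
    (hG : ∀ w ∈ P.support, w ∉ bad → ∀ s, w ∈ G s → w ∉ G (flip w s)) :
    ∃ s, probEvent P (G s) ≤ (1 + probEvent P bad) / 2 := by
  have := Fintype.ofFinite Θ
  by_contra! hlt
  refine (two_mul_sum_probEvent_le_of_involutive P G bad flip hflip hG).not_gt ?_
  calc (1 + probEvent P bad) * Fintype.card Θ
      = 2 * ∑ _s : Θ, (1 + probEvent P bad) / 2 := by
        rw [Finset.sum_const, nsmul_eq_mul, mul_left_comm, Finset.card_univ,
          ENNReal.mul_div_cancel two_ne_zero ENNReal.ofNat_ne_top, mul_comm]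
    _ < 2 * ∑ s, probEvent P (G s) :=
        ENNReal.mul_lt_mul_right two_ne_zero ENNReal.ofNat_ne_top
          (ENNReal.sum_lt_sum_of_nonempty Finset.univ_nonempty fun s _ => hlt s)

theorem exists_probEvent_tv_le_of_involutive {Λ X Θ : Type*} [Finite Θ] [Nonempty Θ]
    (μ : PMF Λ) (e : Θ → Λ → X) (m : ℕ) (f : Multiset X → Multiset X) (bad : Set (Multiset Λ))
    (flip : Multiset Λ → Θ → Θ) (r : ℝ) (hflip : ∀ w, Function.Involutive (flip w))
    (hsame : ∀ w, w.card = m → w ∉ bad → ∀ s, f (w.map (e (flip w s))) = f (w.map (e s)))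
    (hfar : ∀ w, w.card = m → ∀ s, 2 * r < tv (μ.map (e s)) (μ.map (e (flip w s))))
    (A : Multiset X → PMF X) :
    ∃ s, probEvent ((iid (μ.map (e s)) m).map f) {T | tv (A T) (μ.map (e s)) ≤ r} ≤
      (1 + probEvent (iid μ m) bad) / 2 := by
  simp only [iid_map, PMF.map_comp, probEvent_map]
  refine exists_probEvent_le_of_involutive (iid μ m) _ bad flip hflip fun w hw hbad s hs hs' => ?_
  have hcard := card_of_mem_support_iid μ m hw
  simp only [Set.mem_preimage, Function.comp_apply, Set.mem_ofPred_eq, hsame w hcard hbad] at hs hs'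
  have htri := tv_triangle (μ.map (e s)) (A (f (w.map (e s)))) (μ.map (e (flip w s)))
  rw [tv_comm] at hs
  linarith [hfar w hcard s]

end Fooling

section InsertionAdversary

variable {X : Type*} (η : ℝ) (F : ℕ → Multiset X → Multiset X)

/-- The deterministic adversary that inserts the points `F N S` into the sample `S`, where
`N = ⌊η |S|⌋` is the largest number of insertions allowed by the budget `η`. -/
noncomputable def insertionAdversary : Adversary X :=
  fun S => PMF.pure (S + F ⌊η * S.card⌋₊ S)

theorem isAdditive_insertionAdversary : IsAdditive (insertionAdversary η F) := by
  intro S T hT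
  rw [insertionAdversary, PMF.mem_support_pure_iff] at hT
  exact hT ▸ Multiset.le_add_right _ _

theorem fixedBudgetAdd_insertionAdversary {η : ℝ} {F : ℕ → Multiset X → Multiset X} (hη : 0 ≤ η)
    (hF : ∀ N S, (F N S).card = N) : FixedBudgetAdd (insertionAdversary η F) η := by
  refine ⟨fun m => m + ⌊η * m⌋₊, fun S T hT => ?_, fun m => ?_⟩
  · rw [insertionAdversary, PMF.mem_support_pure_iff] at hT
    rw [hT, Multiset.card_add, hF]
  · have hle := Nat.floor_le (mul_nonneg hη m.cast_nonneg)
    have hlt := Nat.lt_floor_add_one (η * m)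
    push_cast
    constructor <;> linarith

end InsertionAdversary

theorem UniversalAdversary.not_additivelyRobustlyLearnable {X : Type*} {C : Set (PMF X)} {α η : ℝ}
    {V : Adversary X} (hV : UniversalAdversary C α V η) (hη₀ : 0 < η) (hη₁ : η < 1)
    (hadd : IsAdditive V) (hbudget : FixedBudgetAdd V η) : ¬ AdditivelyRobustlyLearnable C α :=
  fun ⟨A, mc, hA⟩ => hV ⟨A, mc, hA V η hη₀ hη₁ hadd hbudget⟩

theorem Superlinear.exists_mul_le {g : ℕ → ℕ} (hg : Superlinear g) (c : ℝ) :
    ∃ j : ℕ, 0 < j ∧ c * j ≤ g j := by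
  obtain ⟨j, hj, hgj⟩ := ((Filter.eventually_gt_atTop 0).and (hg.eventually_ge_atTop c)).exists
  exact ⟨j, hj, (le_div_iff₀ (by exact_mod_cast hj)).1 hgj⟩

namespace IsPijk

variable {B : ℕ → Finset ℕ} {i i' j k a : ℕ} {p q : PMF (ℕ × ℕ)}

theorem apply_of_mem (hp : IsPijk B i j k p) (ha : a ∈ B i) :
    p (a, 2 * j + 1) = ((j : ℝ≥0∞)⁻¹ - (k : ℝ≥0∞)⁻¹) * ((B i).card : ℝ≥0∞)⁻¹ := by
  simp [hp (a, 2 * j + 1), ha]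

theorem apply_of_notMem (hp : IsPijk B i j k p) (ha : a ∉ B i) : p (a, 2 * j + 1) = 0 := by
  simp [hp (a, 2 * j + 1), ha]

theorem toReal_apply_of_mem (hp : IsPijk B i j k p) (hj : 0 < j) (hjk : j ≤ k) (ha : a ∈ B i) :
    (p (a, 2 * j + 1)).toReal = ((j : ℝ)⁻¹ - (k : ℝ)⁻¹) / (B i).card := by
  have hle : (k : ℝ≥0∞)⁻¹ ≤ (j : ℝ≥0∞)⁻¹ := by gcongr
  have htop : (j : ℝ≥0∞)⁻¹ ≠ ∞ := by simpa using hj.ne'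
  rw [hp.apply_of_mem ha, ENNReal.toReal_mul, ENNReal.toReal_sub_of_le hle htop]
  simp only [ENNReal.toReal_inv, ENNReal.toReal_natCast, div_eq_mul_inv]

theorem mul_card_sdiff_div_card_le_two_mul_tv (hp : IsPijk B i j k p) (hq : IsPijk B i' j k q)
    (hj : 0 < j) (hjk : j ≤ k) :
    ((j : ℝ)⁻¹ - (k : ℝ)⁻¹) * ((B i \ B i').card / (B i).card) ≤ 2 * tv p q := by
  have hterm : ∀ a ∈ B i \ B i', ((j : ℝ)⁻¹ - (k : ℝ)⁻¹) / (B i).card ≤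
      |(p (a, 2 * j + 1)).toReal - (q (a, 2 * j + 1)).toReal| := by
    intro a ha
    obtain ⟨hmem, hnotMem⟩ := Finset.mem_sdiff.1 ha
    rw [hp.toReal_apply_of_mem hj hjk hmem, hq.apply_of_notMem hnotMem, ENNReal.toReal_zero,
      sub_zero]
    exact le_abs_self _
  calc ((j : ℝ)⁻¹ - (k : ℝ)⁻¹) * ((B i \ B i').card / (B i).card)
      = (B i \ B i').card • (((j : ℝ)⁻¹ - (k : ℝ)⁻¹) / (B i).card) := by
        rw [nsmul_eq_mul]
        ring
    _ ≤ ∑ a ∈ B i \ B i', |(p (a, 2 * j + 1)).toReal - (q (a, 2 * j + 1)).toReal| :=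
        Finset.card_nsmul_le_sum _ _ _ hterm
    _ = ∑ x ∈ (B i \ B i').map (.sectL ℕ (2 * j + 1)), |(p x).toReal - (q x).toReal| := by
        rw [Finset.sum_map]
        rfl
    _ ≤ 2 * tv p q := sum_abs_toReal_sub_le_two_mul_tv p q _

end IsPijk

section Transversal

variable {n : ℕ}

/-- The transversal `{2a + σ(a) : a < n}` of the pairs `{2a, 2a + 1}` that is selected by the bits
`σ`; these are the sets `B_i` hidden from the learner. -/
def transversal (σ : Fin n → Bool) : Finset ℕ :=
  Finset.univ.image fun a => Nat.bit (σ a) a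

theorem bit_mem_transversal {σ : Fin n → Bool} {b : Bool} {a : Fin n} :
    Nat.bit b a ∈ transversal σ ↔ σ a = b := by
  simp only [transversal, Finset.mem_image, Finset.mem_univ, true_and]
  refine ⟨fun ⟨c, hc⟩ => ?_, fun h => ⟨a, by rw [h]⟩⟩
  obtain rfl : c = a := Fin.ext (by simpa only [Nat.div2_bit] using congrArg Nat.div2 hc)
  simpa only [Nat.bodd_bit] using congrArg Nat.bodd hc

theorem injective_bit (σ : Fin n → Bool) : Function.Injective fun a : Fin n => Nat.bit (σ a) a :=
  fun a b h => Fin.ext (by simpa only [Nat.div2_bit] using congrArg Nat.div2 h)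

theorem card_transversal (σ : Fin n → Bool) : (transversal σ).card = n := by
  rw [transversal, Finset.card_image_of_injective _ (injective_bit σ), Finset.card_fin]

theorem card_transversal_sdiff (σ τ : Fin n → Bool) :
    (transversal σ \ transversal τ).card = (Finset.univ.filter fun a => τ a ≠ σ a).card := by
  rw [← Finset.card_image_of_injective _ (injective_bit σ)]
  congr 1
  ext x
  simp only [Finset.mem_sdiff, Finset.mem_image, Finset.mem_filter, Finset.mem_univ, true_and]
  constructor
  · rintro ⟨hx, hxτ⟩
    obtain ⟨a, -, rfl⟩ := Finset.mem_image.1 hx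
    exact ⟨a, mt bit_mem_transversal.2 hxτ, rfl⟩
  · rintro ⟨a, ha, rfl⟩
    exact ⟨bit_mem_transversal.2 rfl, mt bit_mem_transversal.1 ha⟩

end Transversal

section Latent

/-- The mixture components of `p_{i,j,k}`, with the elements of a `B_i` of size `n` numbered by
`Fin n`: drawing a latent sample first and hiding `B_i` in the way it is embedded into `ℕ × ℕ`
couples the samples of all `p_{i,j,k}` for which `B_i` is a transversal. -/
inductive Latent (n : ℕ)
  | origin
  | element (a : Fin n)
  | index
  deriving DecidableEq

/-- The embedding of latent points into `ℕ × ℕ` for `B_i = transversal σ` and `i = code B_i`. -/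
def latentEmbed (code : Finset ℕ → ℕ) (j : ℕ) {n : ℕ} (σ : Fin n → Bool) : Latent n → ℕ × ℕ
  | .origin => (0, 0)
  | .element a => (Nat.bit (σ a) a, 2 * j + 1)
  | .index => (code (transversal σ), 2 * j + 2)

/-- The latent distribution `(1 − 1/j)·δ_origin + (1/j − 1/k)·U_element + (1/k)·δ_index`. -/
noncomputable def latentPMF (n : ℕ) [NeZero n] {j k : ℕ} (hj : 0 < j) (hjk : j ≤ k) :
    PMF (Latent n) :=
  (PMF.ofFintype (α := Fin 3) ![1 - (j : ℝ≥0∞)⁻¹, (j : ℝ≥0∞)⁻¹ - (k : ℝ≥0∞)⁻¹, (k : ℝ≥0∞)⁻¹] (by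
    have hj' : (j : ℝ≥0∞)⁻¹ ≤ 1 := ENNReal.inv_le_one.2 (by exact_mod_cast hj)
    have hjk' : (k : ℝ≥0∞)⁻¹ ≤ (j : ℝ≥0∞)⁻¹ := by gcongr
    simp [Fin.sum_univ_three, add_assoc, tsub_add_cancel_of_le, hj', hjk'])).bind
    ![PMF.pure .origin, (PMF.uniformOfFintype (Fin n)).map .element, PMF.pure .index]

variable {n j k : ℕ} [NeZero n] (hj : 0 < j) (hjk : j ≤ k)

theorem latentPMF_index : latentPMF n hj hjk .index = (k : ℝ≥0∞)⁻¹ := by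
  simp [latentPMF, PMF.bind_apply, tsum_fintype, Fin.sum_univ_three]

theorem isPijk_map_latentPMF {B : ℕ → Finset ℕ} {code : Finset ℕ → ℕ}
    (hcode : Function.RightInverse code B) (σ : Fin n → Bool) :
    IsPijk B (code (transversal σ)) j k ((latentPMF n hj hjk).map (latentEmbed code j σ)) := by
  intro x
  have hinj : Function.Injective (latentEmbed code j σ ∘ Latent.element) :=
    fun a b h => injective_bit σ (congrArg Prod.fst h)
  have hmem : x ∈ Finset.univ.image (latentEmbed code j σ ∘ Latent.element) ↔
      x.1 ∈ transversal σ ∧ x.2 = 2 * j + 1 := by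
    simp [transversal, Prod.ext_iff, latentEmbed, eq_comm]
  rw [latentPMF, PMF.map_bind, PMF.bind_apply, tsum_fintype, Fin.sum_univ_three]
  simp [PMF.map_comp, map_uniformOfFintype_apply hinj, hmem, PMF.pure_map, hcode _,
    card_transversal, latentEmbed]

end Latent

section FlipUnseen

variable {n : ℕ}

/-- The bits `σ` with those flipped whose element does not occur in the latent sample `w`. -/
def flipUnseen (w : Multiset (Latent n)) (σ : Fin n → Bool) : Fin n → Bool :=
  fun a => if .element a ∈ w then σ a else !σ a

theorem flipUnseen_involutive (w : Multiset (Latent n)) : Function.Involutive (flipUnseen w) := by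
  intro σ
  funext a
  by_cases ha : .element a ∈ w <;> simp [flipUnseen, ha]

theorem card_filter_element_mem_le (w : Multiset (Latent n)) :
    (Finset.univ.filter fun a : Fin n => .element a ∈ w).card ≤ w.card := by
  refine le_trans ?_ w.toFinset_card_le
  exact Finset.card_le_card_of_injOn .element (fun a ha => by simpa using ha)
    fun a _ b _ h => by simpa using h

theorem le_two_mul_card_transversal_sdiff_flipUnseen {w : Multiset (Latent n)}
    (hw : 2 * w.card ≤ n) (σ : Fin n → Bool) :
    n ≤ 2 * (transversal σ \ transversal (flipUnseen w σ)).card := by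
  have hunseen : ∀ a, flipUnseen w σ a ≠ σ a ↔ .element a ∉ w := by
    intro a
    by_cases ha : .element a ∈ w <;> simp [flipUnseen, ha]
  have hsum := Finset.card_filter_add_card_filter_not (s := (Finset.univ : Finset (Fin n)))
    fun a => Latent.element a ∈ w
  rw [Finset.card_fin] at hsum
  rw [card_transversal_sdiff, Finset.filter_congr fun a _ => hunseen a]
  have := card_filter_element_mem_le w
  omega

theorem lt_tv_map_latentPMF [NeZero n] {B : ℕ → Finset ℕ} {code : Finset ℕ → ℕ}
    (hcode : Function.RightInverse code B) {j k : ℕ} (hj : 0 < j) (hjk : j ≤ k)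
    {w : Multiset (Latent n)} (hw : 2 * w.card ≤ n) {r : ℝ}
    (hr : 8 * r < (j : ℝ)⁻¹ - (k : ℝ)⁻¹) (σ : Fin n → Bool) :
    2 * r < tv ((latentPMF n hj hjk).map (latentEmbed code j σ))
      ((latentPMF n hj hjk).map (latentEmbed code j (flipUnseen w σ))) := by
  have htv := (isPijk_map_latentPMF hj hjk hcode σ).mul_card_sdiff_div_card_le_two_mul_tv
    (isPijk_map_latentPMF hj hjk hcode (flipUnseen w σ)) hj hjk
  rw [hcode, hcode, card_transversal] at htv
  have hn : (0 : ℝ) < n := by exact_mod_cast NeZero.pos n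
  have hhalf : (1 / 2 : ℝ) ≤ (transversal σ \ transversal (flipUnseen w σ)).card / n := by
    rw [div_le_div_iff₀ two_pos hn]
    exact_mod_cast (by linarith [le_two_mul_card_transversal_sdiff_flipUnseen hw σ] :
      1 * n ≤ (transversal σ \ transversal (flipUnseen w σ)).card * 2)
  have hgap : 0 ≤ (j : ℝ)⁻¹ - (k : ℝ)⁻¹ := sub_nonneg.2 (by gcongr)
  linarith [mul_le_mul_of_nonneg_left hhalf hgap]

end FlipUnseen

section MirrorAdversary

variable (B : ℕ → Finset ℕ) (code : Finset ℕ → ℕ) (j : ℕ)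

/-- The set `D` with every element `x` whose point `(x, 2j + 1)` does not occur in the sample `S`
replaced by its partner in the pair `{2a, 2a + 1}`. -/
def flipUnseenElements (S : Multiset (ℕ × ℕ)) (D : Finset ℕ) : Finset ℕ :=
  D.image fun x => if (x, 2 * j + 1) ∈ S then x else x ^^^ 1

/-- The action of `mirror` on a single point `x` of the sample `S`. -/
def mirrorPoint (S : Multiset (ℕ × ℕ)) (x : ℕ × ℕ) : ℕ × ℕ :=
  if x.2 = 2 * j + 2 then (code (flipUnseenElements j S (B x.1)), x.2) else x

/-- The points of the sample `S` of the form `(i, 2j + 2)`, which reveal the index `i`. -/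
def indexPoints (S : Multiset (ℕ × ℕ)) : Multiset (ℕ × ℕ) :=
  S.filter (·.2 = 2 * j + 2)

/-- The sample `S` with the index points `(i, 2j + 2)` redirected to the set that differs from
`B_i` in all the elements not revealed by `S`. For a sample of `p_{i,j,k}` it is an equally likely
sample of a distribution far from `p_{i,j,k}`. -/
def mirror (S : Multiset (ℕ × ℕ)) : Multiset (ℕ × ℕ) :=
  S.map (mirrorPoint B code j S)

/-- The `N` points inserted by `mirrorAdversary`: the index points of the mirrored sample, filled
up with copies of `(0, 0)`; if there are more than `N` index points, copies of `(0, 0)` only. -/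
def mirrorInsertion (N : ℕ) (S : Multiset (ℕ × ℕ)) : Multiset (ℕ × ℕ) :=
  if (indexPoints j (mirror B code j S)).card ≤ N then
    indexPoints j (mirror B code j S) +
      Multiset.replicate (N - (indexPoints j (mirror B code j S)).card) (0, 0)
  else Multiset.replicate N (0, 0)

/-- The additive adversary of budget `η` that makes a sample and its mirror image
indistinguishable, as long as the sample has few index points. -/
noncomputable def mirrorAdversary (η : ℝ) : Adversary (ℕ × ℕ) :=
  insertionAdversary η (mirrorInsertion B code j)

theorem card_mirrorInsertion (N : ℕ) (S : Multiset (ℕ × ℕ)) :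
    (mirrorInsertion B code j N S).card = N := by
  unfold mirrorInsertion
  split_ifs with hN
  · rw [Multiset.card_add, Multiset.card_replicate, Nat.add_sub_of_le hN]
  · rw [Multiset.card_replicate]

theorem mirrorPoint_snd (S : Multiset (ℕ × ℕ)) (x : ℕ × ℕ) :
    (mirrorPoint B code j S x).2 = x.2 := by
  unfold mirrorPoint
  split_ifs <;> rfl

theorem card_indexPoints_mirror (S : Multiset (ℕ × ℕ)) :
    (indexPoints j (mirror B code j S)).card = (indexPoints j S).card := by
  simp only [indexPoints, mirror, Multiset.filter_map, Multiset.card_map, Function.comp_def,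
    mirrorPoint_snd]

theorem add_indexPoints_mirror (S : Multiset (ℕ × ℕ)) :
    S + indexPoints j (mirror B code j S) = mirror B code j S + indexPoints j S :=
  add_filter_map_comm (φ := mirrorPoint B code j S) _ (fun x => by rw [mirrorPoint_snd])
    (fun _ hx => if_neg hx) S

theorem add_mirrorInsertion_eq {B : ℕ → Finset ℕ} {code : Finset ℕ → ℕ} {j N : ℕ}
    {S T : Multiset (ℕ × ℕ)} (hST : mirror B code j S = T) (hTS : mirror B code j T = S)
    (hN : (indexPoints j S).card ≤ N) :
    T + mirrorInsertion B code j N T = S + mirrorInsertion B code j N S := by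
  have hcard := card_indexPoints_mirror B code j S
  have hadd := add_indexPoints_mirror B code j S
  rw [hST] at hcard hadd
  simp only [mirrorInsertion, hST, hTS, hcard, hN, if_true, ← add_assoc, hadd]

variable {n : ℕ} (σ : Fin n → Bool) (w : Multiset (Latent n))

theorem card_indexPoints_map_latentEmbed :
    (indexPoints j (w.map (latentEmbed code j σ))).card = w.count .index := by
  rw [indexPoints, Multiset.filter_map, Multiset.card_map, Multiset.count,
    Multiset.countP_eq_card_filter]
  congr 1
  refine Multiset.filter_congr fun x _ => ?_
  cases x <;> simp [latentEmbed]

theorem bit_mem_map_latentEmbed {a : Fin n} :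
    (Nat.bit (σ a) a, 2 * j + 1) ∈ w.map (latentEmbed code j σ) ↔ .element a ∈ w := by
  refine ⟨fun h => ?_, Multiset.mem_map_of_mem (latentEmbed code j σ)⟩
  obtain ⟨x, hx, hxa⟩ := Multiset.mem_map.1 h
  cases x with
  | element b => rwa [← injective_bit σ (congrArg Prod.fst hxa)]
  | _ => simp [latentEmbed] at hxa

theorem flipUnseenElements_transversal :
    flipUnseenElements j (w.map (latentEmbed code j σ)) (transversal σ) =
      transversal (flipUnseen w σ) := by
  rw [flipUnseenElements, transversal, transversal, Finset.image_image]
  refine Finset.image_congr fun a _ => ?_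
  have hflip : Nat.bit (σ a) a ^^^ 1 = Nat.bit (!σ a) a := by
    simpa using Nat.xor_bit (σ a) a true 0
  simp only [Function.comp_apply, bit_mem_map_latentEmbed, flipUnseen]
  split_ifs
  exacts [rfl, hflip]

theorem mirror_map_latentEmbed (hcode : Function.RightInverse code B) :
    mirror B code j (w.map (latentEmbed code j σ)) =
      w.map (latentEmbed code j (flipUnseen w σ)) := by
  rw [mirror, Multiset.map_map]
  refine Multiset.map_congr rfl fun x hx => ?_
  cases x with
  | origin => simp [mirrorPoint, latentEmbed]
  | element a => simp [mirrorPoint, latentEmbed, flipUnseen, hx]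
  | index => simp [mirrorPoint, latentEmbed, hcode _, flipUnseenElements_transversal]

theorem add_mirrorInsertion_map_latentEmbed {B : ℕ → Finset ℕ} {code : Finset ℕ → ℕ}
    (hcode : Function.RightInverse code B) {N : ℕ} (hN : w.count .index ≤ N) :
    w.map (latentEmbed code j (flipUnseen w σ)) +
        mirrorInsertion B code j N (w.map (latentEmbed code j (flipUnseen w σ))) =
      w.map (latentEmbed code j σ) +
        mirrorInsertion B code j N (w.map (latentEmbed code j σ)) := by
  refine add_mirrorInsertion_eq (mirror_map_latentEmbed B code j σ w hcode) ?_ ?_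
  · rw [mirror_map_latentEmbed B code j _ w hcode, flipUnseen_involutive w σ]
  · rwa [card_indexPoints_map_latentEmbed]

end MirrorAdversary

theorem probEvent_floor_lt_count_index_le {n j k : ℕ} [NeZero n] (hj : 0 < j) (hjk : j ≤ k)
    (m : ℕ) :
    probEvent (iid (latentPMF n hj hjk) m) {w | ⌊(4 / k : ℝ) * m⌋₊ < w.count .index} ≤ 4⁻¹ := by
  have hk : 0 < k := hj.trans_le hjk
  have hk' : (0 : ℝ) < k := by exact_mod_cast hk
  have hratio : (k : ℝ≥0∞)⁻¹ / ENNReal.ofReal (4 / k) = 4⁻¹ := by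
    rw [ENNReal.ofReal_div_of_pos hk', ENNReal.ofReal_natCast, ENNReal.ofReal_ofNat,
      ENNReal.div_eq_inv_mul, ENNReal.inv_div (by simp) (by simp), ENNReal.div_eq_inv_mul,
      mul_assoc, ENNReal.mul_inv_cancel (by simp [hk.ne']) (by simp), mul_one]
  rw [← hratio, ← latentPMF_index (n := n) hj hjk]
  exact probEvent_iid_floor_lt_count_le _ _ (by positivity) m

theorem exists_mem_Cg_probEvent_tv_le {B : ℕ → Finset ℕ} {code : Finset ℕ → ℕ}
    (hcode : Function.RightInverse code B) {g : ℕ → ℕ} {j : ℕ} (hj : 0 < j) (hjg : j < g j)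
    {r : ℝ} (hr : 8 * r < (j : ℝ)⁻¹ - (g j : ℝ)⁻¹) (A : Multiset (ℕ × ℕ) → PMF (ℕ × ℕ)) (m : ℕ) :
    ∃ p ∈ Cg B g, probEvent ((iid p m).bind (mirrorAdversary B code j (4 / g j)))
      {T | tv (A T) p ≤ r} ≤ (1 + 4⁻¹) / 2 := by
  obtain ⟨σ, hσ⟩ := exists_probEvent_tv_le_of_involutive (latentPMF (2 * m + 1) hj hjg.le)
    (latentEmbed code j) m (fun S => S + mirrorInsertion B code j ⌊(4 / g j : ℝ) * S.card⌋₊ S)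
    {w | ⌊(4 / g j : ℝ) * m⌋₊ < w.count .index} flipUnseen r flipUnseen_involutive
    (fun w hw hfew σ => by
      simp only [Multiset.card_map, hw]
      exact add_mirrorInsertion_map_latentEmbed j σ w hcode (not_lt.1 hfew))
    (fun w hw => lt_tv_map_latentPMF hcode hj hjg.le (by omega) hr) A
  refine ⟨_, ⟨code (transversal σ), j, hj, hjg, ?_, isPijk_map_latentPMF hj hjg.le hcode σ⟩, ?_⟩
  · rw [hcode, ← Finset.card_pos, card_transversal]
    exact NeZero.pos _
  · refine hσ.trans ?_
    gcongr
    exact probEvent_floor_lt_count_index_le hj hjg.le m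

theorem eight_mul_add_lt_inv_sub_inv {α x y : ℝ} (hx : 0 < x) (hxy : 64 * max 1 α * x ≤ y) :
    8 * (α * (4 / y) + x⁻¹ / 32) < x⁻¹ - y⁻¹ := by
  have hxinv : 0 < x⁻¹ := inv_pos.2 hx
  have hy : 64 * x ≤ y := by
    refine le_trans ?_ hxy
    gcongr
    exact le_mul_of_one_le_right (by norm_num) (le_max_left 1 α)
  have hyinv : y⁻¹ ≤ x⁻¹ / 64 := by
    rw [div_eq_mul_inv, ← mul_inv]
    gcongr
    linarith
  have hα : α * (4 / y) ≤ x⁻¹ / 16 := by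
    rw [mul_div_assoc', div_le_iff₀ (by linarith)]
    calc α * 4 ≤ x⁻¹ / 16 * (64 * max 1 α * x) := by
          field_simp
          linarith [le_max_right 1 α]
      _ ≤ x⁻¹ / 16 * y := by gcongr
  linarith

theorem universalAdversary_mirrorAdversary {B : ℕ → Finset ℕ} {code : Finset ℕ → ℕ}
    (hcode : Function.RightInverse code B) {g : ℕ → ℕ} {α : ℝ} {j : ℕ} (hj : 0 < j)
    (hgj : 64 * max 1 α * j ≤ g j) :
    UniversalAdversary (Cg B g) α (mirrorAdversary B code j (4 / g j)) (4 / g j) := by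
  rintro ⟨A, mc, hA⟩
  have hj₁ : (1 : ℝ) ≤ j := by exact_mod_cast hj
  have hjg : j < g j := by
    have : (j : ℝ) < g j := by nlinarith [le_max_left 1 α]
    exact_mod_cast this
  have hε₁ : (j : ℝ)⁻¹ / 32 < 1 := by linarith [inv_le_one_of_one_le₀ hj₁]
  obtain ⟨p, hp, hfail⟩ := exists_mem_Cg_probEvent_tv_le hcode hj hjg
    (eight_mul_add_lt_inv_sub_inv (by positivity) hgj) A (mc ((j : ℝ)⁻¹ / 32) (1 / 4))
  have hsucc := hA p hp ((j : ℝ)⁻¹ / 32) (1 / 4) (by positivity) hε₁ (by norm_num) (by norm_num)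
    _ le_rfl
  refine (hsucc.trans hfail).not_gt ?_
  rw [← ENNReal.toReal_lt_toReal (by finiteness) (by simp),
    ENNReal.toReal_sub_of_le (by norm_num) (by norm_num)]
  norm_num [ENNReal.toReal_add]

theorem stmt1_general {B : ℕ → Finset ℕ} (hB : Function.Surjective B) {g : ℕ → ℕ} {α : ℝ} {j : ℕ}
    (hj : 0 < j) (hgj : 64 * max 1 α * j ≤ g j) :
    ¬ AdditivelyRobustlyLearnable (Cg B g) α ∧
      ∃ (V : Adversary (ℕ × ℕ)) (η : ℝ), 0 < η ∧ η < 1 ∧ IsAdditive V ∧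
        FixedBudgetAdd V η ∧ UniversalAdversary (Cg B g) α V η := by
  obtain ⟨code, hcode⟩ := hB.hasRightInverse
  have hg : (64 : ℝ) ≤ g j := by
    have hj₁ : (1 : ℝ) ≤ j := by exact_mod_cast hj
    nlinarith [le_max_left 1 α]
  have hη₀ : (0 : ℝ) < 4 / g j := by positivity
  have hη₁ : (4 : ℝ) / g j < 1 := by
    rw [div_lt_one] <;> linarith
  have hadd : IsAdditive (mirrorAdversary B code j (4 / g j)) := isAdditive_insertionAdversary _ _
  have hbudget : FixedBudgetAdd (mirrorAdversary B code j (4 / g j)) (4 / g j) :=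
    fixedBudgetAdd_insertionAdversary hη₀.le (card_mirrorInsertion B code j)
  have huniv := universalAdversary_mirrorAdversary hcode hj hgj
  exact ⟨huniv.not_additivelyRobustlyLearnable hη₀ hη₁ hadd hbudget,
    _, _, hη₀, hη₁, hadd, hbudget, huniv⟩

/-- For every superlinear `g` and every `α ≥ 1`, the class `C_g` is not
adaptively additively α-robustly learnable; moreover there is an adaptive additive adversary
with fixed constant budget that is a universal α-adversary for `C_g`. -/
theorem stmt1 (B : ℕ → Finset ℕ) (hB : Function.Surjective B)
    (g : ℕ → ℕ) (hg : Superlinear g) (α : ℝ) (hα : 1 ≤ α) :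
    ¬ AdditivelyRobustlyLearnable (Cg B g) α ∧
      ∃ (V : Adversary (ℕ × ℕ)) (η : ℝ), 0 < η ∧ η < 1 ∧ IsAdditive V ∧
        FixedBudgetAdd V η ∧ UniversalAdversary (Cg B g) α V η := by
  obtain ⟨j, hj, hgj⟩ := hg.exists_mul_le (64 * max 1 α)
  exact stmt1_general hB hj hgj
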